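/- Let K be a field of characteristic 0 and S = K[x,y,z]. Let (A,m_1) be the multiarrangement in V = K^3 consisting of the five hyperplanes ker(x), ker(y), ker(x−y), ker(x−z), ker(y−z) with multiplicities m_1 given by 2, 1, 1, 1, 2 respectively (so Q̃_1 = x^2 y (x−y)(x−z)(y−z)^2). Then (A,m_1) is not free; that is, D^1(A,m_1) is not a free S-module. -/

import Mathlib

/-!
The module `M = D1 A` embeds in `S³`, so if it is free its rank is at most three, and then `M/𝔪M`
has dimension at most three over `K`, where `𝔪 = (x, y, z)`. But `M` needs at least four
generators. There is one member `θ₀` of degree two and, since every member has order at least two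
at the origin with quadratic part in `K θ₀`, the cubic parts of elements of `𝔪M` lie in
`⟨x, y, z⟩ θ₀`; three further cubic members are independent modulo that space.

`gens` lists the four members. The independence is checked by four explicit functionals `tay` on
Taylor coefficients at the origin: they vanish on `𝔪M` (`tay_smul`, which rests on the linear
relations of `Cond.taylor`), while no nontrivial `K`-combination of the four members is killed by
all of them (`tay_gens`). Were the rank at most three, some nontrivial combination would have
coordinates in `𝔪`, hence would lie in `𝔪M`, a contradiction.
-/

open MvPolynomial

noncomputable section

/-- The linear form (degree-one polynomial) associated to a linear functional on `K^ℓ`. -/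
def formPoly {K : Type*} [Field K] {ℓ : ℕ} (φ : Module.Dual K (Fin ℓ → K)) :
    MvPolynomial (Fin ℓ) K :=
  ∑ i : Fin ℓ, MvPolynomial.C (φ (Pi.single i 1)) * MvPolynomial.X i

/-- A multiarrangement of hyperplanes in `K^ℓ`: a finite set of (pairwise distinct)
hyperplanes, recorded by nonzero defining linear functionals with pairwise distinct
kernels, together with a positive multiplicity attached to each hyperplane. -/
structure MultiArr (K : Type*) [Field K] (ℓ : ℕ) where
  duals : Finset (Module.Dual K (Fin ℓ → K))
  ne_zero : ∀ φ ∈ duals, φ ≠ 0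
  distinct_ker : ∀ φ ∈ duals, ∀ ψ ∈ duals, φ ≠ ψ → LinearMap.ker φ ≠ LinearMap.ker ψ
  mult : Module.Dual K (Fin ℓ → K) → ℕ
  mult_pos : ∀ φ ∈ duals, 0 < mult φ

variable {K : Type*} [Field K] {ℓ : ℕ}

/-- The i-th coordinate functional x_i on K^l. -/
def coordFn (i : Fin ℓ) : Module.Dual K (Fin ℓ → K) := LinearMap.proj i

/-- The derivation module `D^1(𝒜,m) = {θ ∈ Der_K(S) : θ(α_H) ∈ α_H^{m(H)}S}`. -/
def D1 (A : MultiArr K ℓ) :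
    Submodule (MvPolynomial (Fin ℓ) K)
      (Derivation K (MvPolynomial (Fin ℓ) K) (MvPolynomial (Fin ℓ) K)) where
  carrier := {θ | ∀ φ ∈ A.duals, θ (formPoly φ) ∈ Ideal.span {formPoly φ ^ A.mult φ}}
  add_mem' := fun ha hb φ hφ => by
    simpa using add_mem (ha φ hφ) (hb φ hφ)
  zero_mem' := fun φ hφ => by simp
  smul_mem' := fun c θ hθ φ hφ => by
    simpa using Ideal.mul_mem_left _ c (hθ φ hφ)

/-! ### Membership in `D1` -/

lemma formPoly_coord (i : Fin 3) : formPoly (coordFn i : Module.Dual K (Fin 3 → K)) = X i := by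
  simp [formPoly, coordFn, Pi.single_apply]

lemma formPoly_coord_sub (i j : Fin 3) :
    formPoly (coordFn i - coordFn j : Module.Dual K (Fin 3 → K)) = X i - X j := by
  rw [← formPoly_coord, ← formPoly_coord]
  simp [formPoly, sub_mul, Finset.sum_sub_distrib]

/-- The divisibility conditions defining the derivation module of `x²y(x−y)(x−z)(y−z)²`. -/
def Cond (θ : Derivation K (MvPolynomial (Fin 3) K) (MvPolynomial (Fin 3) K)) : Prop :=
  X 0 ^ 2 ∣ θ (X 0) ∧ X 1 ∣ θ (X 1) ∧ X 0 - X 1 ∣ θ (X 0) - θ (X 1) ∧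
    X 0 - X 2 ∣ θ (X 0) - θ (X 2) ∧ (X 1 - X 2) ^ 2 ∣ θ (X 1) - θ (X 2)

/-! ### Taylor coefficients at the origin -/

/-- The value at the origin, as an additive map. -/
def ev : MvPolynomial (Fin 3) K →+ K := (constantCoeff : MvPolynomial (Fin 3) K →+* K)

lemma ev_mul (p q : MvPolynomial (Fin 3) K) : ev (p * q) = ev p * ev q := by simp [ev]
lemma ev_X (i : Fin 3) : ev (X i : MvPolynomial (Fin 3) K) = 0 := by simp [ev]
lemma ev_C (a : K) : ev (C a : MvPolynomial (Fin 3) K) = a := by simp [ev]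
lemma ev_one : ev (1 : MvPolynomial (Fin 3) K) = 1 := by simp [ev]

/-- Members have order at least two at the origin, and their quadratic parts satisfy the linear
relations that hold for multiples of `(x², 2xy − y², 2xy − 2yz + z²)`. -/
lemma Cond.taylor {θ : Derivation K (MvPolynomial (Fin 3) K) (MvPolynomial (Fin 3) K)}
    [CharZero K] (h : Cond θ) :
    (∀ i, ev (θ (X i)) = 0) ∧ (∀ i j, ev (pderiv j (θ (X i))) = 0) ∧
    ev (pderiv 2 (pderiv 0 (θ (X 0)))) = 0 ∧ ev (pderiv 1 (pderiv 0 (θ (X 0)))) = 0 ∧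
    ev (pderiv 2 (pderiv 1 (θ (X 1)))) = 0 ∧
    ev (pderiv 1 (pderiv 1 (θ (X 1)))) = - ev (pderiv 0 (pderiv 0 (θ (X 0)))) ∧
    ev (pderiv 2 (pderiv 2 (θ (X 2)))) = ev (pderiv 0 (pderiv 0 (θ (X 0)))) := by
  obtain ⟨⟨p, hp⟩, ⟨q, hq⟩, ⟨r, hr⟩, ⟨s, hs⟩, ⟨t, ht⟩⟩ := h
  have hh : θ (X 2) = X 0 ^ 2 * p - (X 0 - X 2) * s := by rw [← hp, ← hs]; ring
  rw [hp, hq] at hr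
  rw [hq, hh] at ht
  -- Comparing first and second derivatives at the origin gives linear equations in the values and
  -- first derivatives of the quotients `p, q, r, s, t`.
  have E0 := congrArg (fun w => fun j => ev (pderiv j w)) hr
  have F0 := congrArg (fun w => fun j => ev (pderiv j w)) ht
  have E := congrArg (fun w => fun i j => ev (pderiv i (pderiv j w))) hr
  have F := congrArg (fun w => fun i j => ev (pderiv i (pderiv j w))) ht
  simp only [funext_iff, Fin.forall_fin_succ] at E0 F0 E F
  simp [pderiv_X, Pi.single_apply, ev_mul, ev_X, ev_one, pow_two, Fin.forall_fin_succ,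
    hp, hq, hh] at E0 F0 E F ⊢
  clear hp hq hr hs ht hh
  grind

/-- The values at the origin of four differential operators on the components of a derivation.
On derivations satisfying `Cond` they kill every multiple by a polynomial vanishing at the
origin. -/
def tay : Derivation K (MvPolynomial (Fin 3) K) (MvPolynomial (Fin 3) K) →+ (Fin 4 → K) where
  toFun θ := ![ev (pderiv 0 (pderiv 0 (θ (X 0)))),
    ev (pderiv 2 (pderiv 1 (pderiv 1 (θ (X 1))))) + ev (pderiv 2 (pderiv 0 (pderiv 0 (θ (X 0))))),
    ev (pderiv 1 (pderiv 1 (pderiv 1 (θ (X 1))))) +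
      3 * ev (pderiv 1 (pderiv 0 (pderiv 0 (θ (X 0))))),
    ev (pderiv 2 (pderiv 2 (pderiv 2 (θ (X 2))))) -
      3 * ev (pderiv 2 (pderiv 0 (pderiv 0 (θ (X 0)))))]
  map_zero' := by ext i; fin_cases i <;> simp
  map_add' θ η := by ext i; fin_cases i <;> simp <;> ring

lemma tay_smul [CharZero K] {θ : Derivation K (MvPolynomial (Fin 3) K) (MvPolynomial (Fin 3) K)}
    (h : Cond θ) {c : MvPolynomial (Fin 3) K} (hc : ev c = 0) : tay (c • θ) = 0 := by
  obtain ⟨h0, h1, ha, hb, hd, he, hf⟩ := h.taylor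
  ext i
  fin_cases i <;>
    simp [tay, ev_mul, h0, h1, ha, hb, hd, he, hf, hc] <;> ring

/-- The quadratic member of the derivation module, followed by three cubic ones. -/
def gens : Fin 4 → Derivation K (MvPolynomial (Fin 3) K) (MvPolynomial (Fin 3) K) :=
  ![mkDerivation K ![X 0 ^ 2, X 1 * (2 * X 0 - X 1), 2 * X 0 * X 1 - 2 * X 1 * X 2 + X 2 ^ 2],
    mkDerivation K ![0, X 1 * (X 0 - X 1) * (X 1 - X 2), X 1 * (X 0 - X 2) * (X 1 - X 2)],
    mkDerivation K ![0, X 1 * (X 0 - X 1) ^ 2, X 1 * (X 0 - X 2) * (X 0 - 2 * X 1 + X 2)],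
    mkDerivation K ![0, 0, (X 0 - X 2) * (X 1 - X 2) ^ 2]]

lemma gens_cond (i : Fin 4) : Cond (gens i : Derivation K _ _) := by
  fin_cases i <;> simp only [gens, Cond] <;> simp [mkDerivation_X]
  · refine ⟨⟨X 0 - X 1, by ring⟩, ⟨X 0 - 2 * X 1 + X 2, by ring⟩, ⟨-1, by ring⟩⟩
  · refine ⟨⟨(X 0 - X 1) * (X 1 - X 2), by ring⟩, ⟨X 1 * (X 1 - X 2), by ring⟩,
      ⟨X 1 * (X 1 - X 2), by ring⟩, ⟨-X 1, by ring⟩⟩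
  · refine ⟨⟨X 1 * (X 0 - X 1), by ring⟩, ⟨X 1 * (X 0 - 2 * X 1 + X 2), by ring⟩, ⟨X 1, by ring⟩⟩

/-- The matrix of `tay` on `gens` is triangular with nonzero diagonal. -/
lemma tay_gens [CharZero K] (a : Fin 4 → K)
    (h : tay (K := K) (∑ i, (C (a i) : MvPolynomial (Fin 3) K) • gens i) = 0) : a = 0 := by
  have h0 := congrFun h 0
  have h1 := congrFun h 1
  have h2 := congrFun h 2
  have h3 := congrFun h 3
  simp [tay, gens, Fin.sum_univ_four, mkDerivation_X, pderiv_X, ev_mul, ev_X, ev_one,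
    ev_C, pow_two] at h0 h1 h2 h3
  norm_num [h1] at h2 h3
  ext i
  fin_cases i <;> assumption

/-! ### Freeness forces rank at most three -/

lemma mem_D1_iff (A : MultiArr K 3)
    (hduals : ∀ φ : Module.Dual K (Fin 3 → K), φ ∈ A.duals ↔
      (φ = coordFn 0 ∨ φ = coordFn 1 ∨
       φ = coordFn 0 - coordFn 1 ∨
       φ = coordFn 0 - coordFn 2 ∨
       φ = coordFn 1 - coordFn 2))
    (hx : A.mult (coordFn 0) = 2)
    (hy : A.mult (coordFn 1) = 1)
    (hxy : A.mult (coordFn 0 - coordFn 1) = 1)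
    (hxz : A.mult (coordFn 0 - coordFn 2) = 1)
    (hyz : A.mult (coordFn 1 - coordFn 2) = 2)
    (θ : Derivation K (MvPolynomial (Fin 3) K) (MvPolynomial (Fin 3) K)) :
    θ ∈ D1 A ↔ Cond θ := by
  change (∀ φ ∈ A.duals, θ (formPoly φ) ∈ Ideal.span {formPoly φ ^ A.mult φ}) ↔ _
  simp only [hduals, forall_eq_or_imp, forall_eq, hx, hy, hxy, hxz, hyz, formPoly_coord,
    formPoly_coord_sub, Ideal.mem_span_singleton, pow_one, map_sub, Cond]

/-- A derivation as the vector of its values on the variables. -/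
def comps : Derivation K (MvPolynomial (Fin 3) K) (MvPolynomial (Fin 3) K)
    →ₗ[MvPolynomial (Fin 3) K] (Fin 3 → MvPolynomial (Fin 3) K) where
  toFun θ i := θ (X i)
  map_add' _ _ := rfl
  map_smul' _ _ := rfl

lemma comps_injective : Function.Injective (comps (K := K)) := fun _ _ h =>
  derivation_ext fun i => congrFun h i

/-- Over a field of characteristic `0`, the multiarrangement in `K^3`
defined by `Q̃₁ = x²y(x−y)(x−z)(y−z)²` (the five hyperplanes `ker x`, `ker y`,
`ker (x−y)`, `ker (x−z)`, `ker (y−z)` with multiplicities `2,1,1,1,2`) is not free. -/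
theorem ziegler_subexample_not_free [CharZero K] (A : MultiArr K 3)
    (hduals : ∀ φ : Module.Dual K (Fin 3 → K), φ ∈ A.duals ↔
      (φ = coordFn 0 ∨ φ = coordFn 1 ∨
       φ = coordFn 0 - coordFn 1 ∨
       φ = coordFn 0 - coordFn 2 ∨
       φ = coordFn 1 - coordFn 2))
    (hx : A.mult (coordFn 0) = 2)
    (hy : A.mult (coordFn 1) = 1)
    (hxy : A.mult (coordFn 0 - coordFn 1) = 1)
    (hxz : A.mult (coordFn 0 - coordFn 2) = 1)
    (hyz : A.mult (coordFn 1 - coordFn 2) = 2) :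
    ¬ Module.Free (MvPolynomial (Fin 3) K) ↥(D1 A) := by
  have hmem := mem_D1_iff A hduals hx hy hxy hxz hyz
  intro hfree
  let incl := comps.comp (D1 A).subtype
  have hinj : Function.Injective incl := comps_injective.comp (D1 A).injective_subtype
  have hfin : Module.Finite (MvPolynomial (Fin 3) K) (D1 A) := Module.Finite.of_injective incl hinj
  have hrank : Module.finrank (MvPolynomial (Fin 3) K) (D1 A) ≤ 3 := by
    simpa using LinearMap.finrank_le_finrank_of_injective hinj
  let b := Module.finBasis (MvPolynomial (Fin 3) K) (D1 A)
  let e : Fin 4 → D1 A := fun i => ⟨gens i, (hmem _).2 (gens_cond i)⟩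
  -- Four vectors of constant terms of coordinates, in a space of dimension at most three.
  have hdep : ¬ LinearIndependent K
      (fun i j => ev (b.repr (e i) j) : Fin 4 → Fin (Module.finrank _ (D1 A)) → K) := by
    intro hli
    have := hli.fintype_card_le_finrank
    simp at this
    omega
  obtain ⟨a, ha, i, hi⟩ := Fintype.not_linearIndependent_iff.1 hdep
  set u : D1 A := ∑ i, (C (a i) : MvPolynomial (Fin 3) K) • e i with hu
  have hc : ∀ j, ev (b.repr u j) = 0 := fun j => by
    have := congrFun ha j
    simpa [hu, ev_mul, ev_C, Finsupp.finsetSum_apply] using this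
  have hu1 : (u : Derivation K _ _) = ∑ i, (C (a i) : MvPolynomial (Fin 3) K) • gens i := by
    simp [hu, e]
  have hu2 : (u : Derivation K (MvPolynomial (Fin 3) K) (MvPolynomial (Fin 3) K)) =
      ∑ j, b.repr u j • (b j).1 := by
    refine (congrArg Subtype.val (b.sum_repr u).symm).trans ?_
    simp only [Submodule.coe_sum, Submodule.coe_smul]
  refine hi (congrFun (tay_gens a ?_) i)
  rw [← hu1, hu2, map_sum]
  exact Finset.sum_eq_zero fun j _ => tay_smul ((hmem _).1 (b j).2) (hc j)
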